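/- arXiv:2204.00870 — 3 statements merged into one kernel-verified Lean document; each statement's English description precedes it below -/
import Mathlib

section
/- Let a transition system with states S, total successor relation step, terminal set Term (terminal states only step to themselves), initial set Init, and cost valuation c : S → ℤ be terminating, and let φ : S → ℝ be a potential function for it. Then for every reachable state s and every run ρ from s, the cost of ρ is bounded above by φ(s), i.e. (c(ρ N) − c(s) : ℝ) ≤ φ(s) where N is the first index at which ρ is terminal. (Consequently φ(s) is an upper bound on the maximal cost CostSup(s) of runs from s.) -/
/-- A run of the transition system from state `s`. -/
def IsRun {S : Type*} (step : S → S → Prop) (s : S) (ρ : ℕ → S) : Prop :=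
  ρ 0 = s ∧ ∀ n, step (ρ n) (ρ (n + 1))

/-- `s'` is reachable from `s`. -/
def ReachableFrom {S : Type*} (step : S → S → Prop) (s s' : S) : Prop :=
  ∃ ρ n, IsRun step s ρ ∧ ρ n = s'

/-- `s'` is reachable from some initial state in `Init`. -/
def Reachable {S : Type*} (step : S → S → Prop) (Init : Set S) (s' : S) : Prop :=
  ∃ s ∈ Init, ReachableFrom step s s'

/-- The system is terminating: every run from a reachable state visits a terminal state. -/
def Terminating {S : Type*} (step : S → S → Prop) (Term Init : Set S) : Prop :=
  ∀ s, Reachable step Init s → ∀ ρ, IsRun step s ρ → ∃ n, ρ n ∈ Term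

/-- The cost of a run: `c (ρ N) - c (ρ 0)` where `N` is the least index with `ρ N ∈ Term`. -/
noncomputable def RunCost {S : Type*} (Term : Set S) (c : S → ℤ) (ρ : ℕ → S) : ℤ :=
  c (ρ (sInf {n | ρ n ∈ Term})) - c (ρ 0)

/-- Potential function: sufficiency preservation and sufficiency on termination. -/
def IsPF {S : Type*} (step : S → S → Prop) (Term Init : Set S) (c : S → ℤ)
    (φ : S → ℝ) : Prop :=
  (∀ s s', Reachable step Init s → step s s' →
    φ s ≥ φ s' + ((c s' : ℝ) - (c s : ℝ))) ∧
  (∀ s, Reachable step Init s → s ∈ Term → φ s ≥ 0)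

/-- Anti-potential function: insufficiency preservation and insufficiency on termination. -/
def IsAntiPF {S : Type*} (step : S → S → Prop) (Term Init : Set S) (c : S → ℤ)
    (χ : S → ℝ) : Prop :=
  (∀ s s', Reachable step Init s → step s s' →
    χ s ≤ χ s' + ((c s' : ℝ) - (c s : ℝ))) ∧
  (∀ s, Reachable step Init s → s ∈ Term → χ s ≤ 0)

section Runs

variable {S : Type*} {step : S → S → Prop} {s t u : S} {ρ : ℕ → S}

theorem IsRun.cons (hst : step s t) (hρ : IsRun step t ρ) :
    IsRun step s (fun | 0 => s | n + 1 => ρ n) := by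
  obtain ⟨rfl, hsteps⟩ := hρ
  exact ⟨rfl, fun
    | 0 => hst
    | n + 1 => hsteps n⟩

theorem IsRun.reachableFrom (hρ : IsRun step s ρ) (n : ℕ) : ReachableFrom step s (ρ n) :=
  ⟨ρ, n, hρ, rfl⟩

theorem ReachableFrom.head (hst : step s t) (htu : ReachableFrom step t u) :
    ReachableFrom step s u := by
  obtain ⟨ρ, n, hρ, rfl⟩ := htu
  exact (hρ.cons hst).reachableFrom (n + 1)

theorem ReachableFrom.trans (hst : ReachableFrom step s t) (htu : ReachableFrom step t u) :
    ReachableFrom step s u := by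
  obtain ⟨ρ, n, hρ, rfl⟩ := hst
  induction n with
  | zero => exact hρ.1 ▸ htu
  | succ n ih => exact ih (htu.head (hρ.2 n))

theorem Reachable.trans {Init : Set S} (hs : Reachable step Init s)
    (hst : ReachableFrom step s t) : Reachable step Init t := by
  obtain ⟨i, hi, his⟩ := hs
  exact ⟨i, hi, his.trans hst⟩

end Runs

section PotentialFunctions

variable {S : Type*} {step : S → S → Prop} {Term Init : Set S} {c : S → ℤ} {φ : S → ℝ}
  {s : S} {ρ : ℕ → S}

theorem IsPF.antitone_add_cost (hφ : IsPF step Term Init c φ) (hs : Reachable step Init s)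
    (hρ : IsRun step s ρ) : Antitone fun n => φ (ρ n) + c (ρ n) := by
  refine antitone_nat_of_succ_le fun n => ?_
  have hstep : φ (ρ n) ≥ φ (ρ (n + 1)) + ((c (ρ (n + 1)) : ℝ) - c (ρ n)) :=
    hφ.1 _ _ (hs.trans (hρ.reachableFrom n)) (hρ.2 n)
  linarith

theorem potential_upper_bounds_cost_general (hφ : IsPF step Term Init c φ)
    (hs : Reachable step Init s) (hρ : IsRun step s ρ) {N : ℕ} (hN : ρ N ∈ Term) :
    (c (ρ N) : ℝ) - c s ≤ φ s := by
  have hdecr : φ (ρ N) + c (ρ N) ≤ φ (ρ 0) + c (ρ 0) :=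
    hφ.antitone_add_cost hs hρ N.zero_le
  have hterminal : 0 ≤ φ (ρ N) := hφ.2 _ (hs.trans (hρ.reachableFrom N)) hN
  rw [hρ.1] at hdecr
  linarith

end PotentialFunctions

/-- a potential function upper-bounds the cost of every run from a
reachable state in a terminating transition system. -/
theorem potential_upper_bounds_cost {S : Type*}
    (step : S → S → Prop) (Term Init : Set S) (c : S → ℤ)
    (htotal : ∀ s : S, ∃ s', step s s')
    (hTerm : ∀ s ∈ Term, ∀ s', step s s' → s' = s)
    (hterminating : Terminating step Term Init)
    (φ : S → ℝ) (hφ : IsPF step Term Init c φ)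
    (s : S) (hs : Reachable step Init s)
    (ρ : ℕ → S) (hρ : IsRun step s ρ)
    (N : ℕ) (hN : ρ N ∈ Term) (hNmin : ∀ m < N, ρ m ∉ Term) :
    ((c (ρ N) : ℝ) - (c s : ℝ)) ≤ φ s :=
  potential_upper_bounds_cost_general hφ hs hρ hN
end

section
/- Let a transition system with states S, total successor relation step, terminal set Term (terminal states only step to themselves), initial set Init, and cost valuation c : S → ℤ be terminating, and assume that for every reachable state s the set of costs {Cost(ρ) : ρ a run from s} is bounded above. Then the function Φ : S → ℝ defined on each state s by Φ(s) = sSup {(Cost(ρ) : ℝ) : ρ a run from s} is a potential function: it satisfies the sufficiency preservation condition at every reachable state and its successors, and it is nonnegative at every reachable terminal state. -/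
/-!
Prepending a non-terminal state `s` to a run `ρ` from a successor `s'` delays the first terminal
visit by one step and leaves the state visited there unchanged, so it changes the cost by exactly
`c s' - c s`. Hence every run from `s'` gives a run from `s` whose cost is larger by `c s' - c s`,
and sufficiency preservation follows by taking suprema.
-/

section Runs

variable {S : Type*} {step : S → S → Prop} {s s' : S} {ρ : ℕ → S}

theorem exists_isRun (htotal : ∀ s, ∃ s', step s s') (s : S) : ∃ ρ, IsRun step s ρ := by
  choose next step_next using htotal
  refine ⟨fun n => next^[n] s, rfl, fun n => ?_⟩
  simpa only [Function.iterate_succ_apply'] using step_next (next^[n] s)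

/-- The sequence `s, ρ 0, ρ 1, …`, which extends a run backwards along a step. -/
def consRun (s : S) (ρ : ℕ → S) : ℕ → S
  | 0 => s
  | n + 1 => ρ n

theorem IsRun.consRun (hρ : IsRun step s' ρ) (hstep : step s s') :
    IsRun step s (consRun s ρ) := by
  obtain ⟨rfl, hρ⟩ := hρ
  refine ⟨rfl, fun n => ?_⟩
  cases n with
  | zero => exact hstep
  | succ n => exact hρ n

theorem exists_consRun_mem_iff {T : Set S} (hs : s ∉ T) :
    (∃ n, consRun s ρ n ∈ T) ↔ ∃ n, ρ n ∈ T :=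
  Nat.or_exists_add_one.symm.trans (or_iff_right hs)

theorem sInf_consRun_mem {T : Set S} (hs : s ∉ T) (hρ : ∃ n, ρ n ∈ T) :
    sInf {n | consRun s ρ n ∈ T} = sInf {n | ρ n ∈ T} + 1 := by
  have hvisit : consRun s ρ (sInf {n | consRun s ρ n ∈ T}) ∈ T :=
    Nat.sInf_mem ((exists_consRun_mem_iff hs).2 hρ)
  have hpos : 1 ≤ sInf {n | consRun s ρ n ∈ T} := by
    refine Nat.one_le_iff_ne_zero.2 fun hzero => hs ?_
    rwa [hzero] at hvisit
  exact (Nat.sInf_add (p := fun n => consRun s ρ n ∈ T) hpos).symm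

theorem Terminating.exists_mem_of_step {Term Init : Set S} (hterm : Terminating step Term Init)
    (hs : Reachable step Init s) (hsT : s ∉ Term) (hstep : step s s') (hρ : IsRun step s' ρ) :
    ∃ n, ρ n ∈ Term :=
  (exists_consRun_mem_iff hsT).1 (hterm s hs _ (hρ.consRun hstep))

end Runs

section Costs

variable {S : Type*} {step : S → S → Prop} {Term : Set S} {c : S → ℤ} {s s' : S} {ρ : ℕ → S}

theorem runCost_eq_zero (h : ρ 0 ∈ Term) : RunCost Term c ρ = 0 := by
  have hfirst : sInf {n | ρ n ∈ Term} = 0 := Nat.sInf_eq_zero.2 (Or.inl h)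
  rw [RunCost, hfirst, sub_self]

theorem runCost_consRun (hs : s ∉ Term) (hρ : ∃ n, ρ n ∈ Term) :
    RunCost Term c (consRun s ρ) = RunCost Term c ρ + (c (ρ 0) - c s) := by
  rw [RunCost, RunCost, sInf_consRun_mem hs hρ]
  simp only [consRun]
  ring

variable (step Term c s) in
/-- The set of costs of the runs from `s`, regarded as real numbers. -/
def runCosts : Set ℝ :=
  {x | ∃ ρ : ℕ → S, IsRun step s ρ ∧ x = (RunCost Term c ρ : ℝ)}

variable (step Term c s) in
/-- The supremum `Φ s` of the costs of the runs from `s`. As a real `sSup`, it takes the value `0`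
when there is no run from `s` or the costs are unbounded above. -/
noncomputable def costSup : ℝ :=
  sSup (runCosts step Term c s)

theorem IsRun.runCost_mem_runCosts (hρ : IsRun step s ρ) :
    (RunCost Term c ρ : ℝ) ∈ runCosts step Term c s :=
  ⟨ρ, hρ, rfl⟩

theorem costSup_nonneg_of_mem (hs : s ∈ Term) : 0 ≤ costSup step Term c s := by
  refine Real.sSup_nonneg ?_
  rintro _ ⟨ρ, ⟨rfl, -⟩, rfl⟩
  rw [runCost_eq_zero hs, Int.cast_zero]

theorem costSup_add_le (hbdd : BddAbove (runCosts step Term c s)) (hs : s ∉ Term)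
    (hstep : step s s') (hrun : ∃ ρ, IsRun step s' ρ)
    (hvisit : ∀ ρ, IsRun step s' ρ → ∃ n, ρ n ∈ Term) :
    costSup step Term c s' + ((c s' : ℝ) - c s) ≤ costSup step Term c s := by
  obtain ⟨ρ₀, hρ₀⟩ := hrun
  rw [← le_sub_iff_add_le]
  refine csSup_le ⟨_, hρ₀.runCost_mem_runCosts⟩ ?_
  rintro _ ⟨ρ, hρ, rfl⟩
  rw [le_sub_iff_add_le]
  calc (RunCost Term c ρ : ℝ) + (c s' - c s)
      = (RunCost Term c (consRun s ρ) : ℝ) := by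
        rw [runCost_consRun hs (hvisit ρ hρ), hρ.1]
        push_cast
        rfl
    _ ≤ costSup step Term c s := le_csSup hbdd (hρ.consRun hstep).runCost_mem_runCosts

end Costs

/-- the pointwise supremum of run costs is a potential function. -/
theorem costSup_is_potential {S : Type*}
    (step : S → S → Prop) (Term Init : Set S) (c : S → ℤ)
    (htotal : ∀ s : S, ∃ s', step s s')
    (hTerm : ∀ s ∈ Term, ∀ s', step s s' → s' = s)
    (hterminating : Terminating step Term Init)
    (hbdd : ∀ s, Reachable step Init s →
      BddAbove {x : ℝ | ∃ ρ : ℕ → S, IsRun step s ρ ∧ x = (RunCost Term c ρ : ℝ)}) :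
    IsPF step Term Init c
      (fun s => sSup {x : ℝ | ∃ ρ : ℕ → S, IsRun step s ρ ∧ x = (RunCost Term c ρ : ℝ)}) := by
  change IsPF step Term Init c (costSup step Term c)
  refine ⟨fun s s' hs hstep => ?_, fun s _ hsT => costSup_nonneg_of_mem hsT⟩
  by_cases hsT : s ∈ Term
  · obtain rfl := hTerm s hsT s' hstep
    rw [sub_self, add_zero]
  · exact costSup_add_le (hbdd s hs) hsT hstep (exists_isRun htotal s')
      fun ρ hρ => hterminating.exists_mem_of_step hs hsT hstep hρ
end

section
/- Let T_new and T_old be two terminating transition systems sharing an input type X, input set Θ₀, and initial-state maps ι_new, ι_old. Suppose χ_new is an anti-potential function for T_new and φ_old is a potential function for T_old. Then for every input x ∈ Θ₀, every run ρ_new from ι_new x in T_new and every run ρ_old from ι_old x in T_old, Cost(ρ_new) − Cost(ρ_old) ≥ χ_new(ι_new x) − φ_old(ι_old x). -/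
/-- `t` is a threshold for the DiffCost problem. -/
noncomputable def IsThreshold {Sn So X : Type*}
    (stepN : Sn → Sn → Prop) (TermN : Set Sn) (cN : Sn → ℤ)
    (stepO : So → So → Prop) (TermO : Set So) (cO : So → ℤ)
    (Θ₀ : Set X) (ιN : X → Sn) (ιO : X → So) (t : ℝ) : Prop :=
  ∀ x ∈ Θ₀, ∀ ρN : ℕ → Sn, IsRun stepN (ιN x) ρN →
    ∀ ρO : ℕ → So, IsRun stepO (ιO x) ρO →
      ((RunCost TermN cN ρN : ℝ) - (RunCost TermO cO ρO : ℝ)) ≤ t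

section SingleSystem

variable {S : Type*} {step : S → S → Prop} {Term Init : Set S} {c : S → ℤ} {φ χ : S → ℝ}
  {s : S} {ρ : ℕ → S}

theorem IsRun.reachable (hρ : IsRun step s ρ) (hs : s ∈ Init) (n : ℕ) :
    Reachable step Init (ρ n) :=
  ⟨s, hs, ρ, n, hρ, rfl⟩

theorem Terminating.exists_mem (hT : Terminating step Term Init) (hs : s ∈ Init)
    (hρ : IsRun step s ρ) : ∃ n, ρ n ∈ Term :=
  hT s (hρ.1 ▸ hρ.reachable hs 0) ρ hρ

theorem runCost_neg (Term : Set S) (c : S → ℤ) (ρ : ℕ → S) :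
    RunCost Term (-c) ρ = -RunCost Term c ρ := by
  simp only [RunCost, Pi.neg_apply]
  ring

theorem IsAntiPF.monotone_add_cost (hχ : IsAntiPF step Term Init c χ) (hs : s ∈ Init)
    (hρ : IsRun step s ρ) : Monotone fun n ↦ χ (ρ n) + (c (ρ n) : ℝ) :=
  monotone_nat_of_le_succ fun n ↦ by
    linarith [hχ.1 _ _ (hρ.reachable hs n) (hρ.2 n)]

theorem IsAntiPF.le_runCost (hχ : IsAntiPF step Term Init c χ) (hs : s ∈ Init)
    (hρ : IsRun step s ρ) (hterm : ∃ n, ρ n ∈ Term) : χ s ≤ RunCost Term c ρ := by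
  set N := sInf {n | ρ n ∈ Term} with hN
  have hN_mem : ρ N ∈ Term := Nat.sInf_mem hterm
  have hN_nonpos : χ (ρ N) ≤ 0 := hχ.2 _ (hρ.reachable hs N) hN_mem
  have hmono : χ (ρ 0) + c (ρ 0) ≤ χ (ρ N) + c (ρ N) := hχ.monotone_add_cost hs hρ N.zero_le
  calc
    χ s = χ (ρ 0) := by rw [hρ.1]
    _ ≤ c (ρ N) - c (ρ 0) := by linarith
    _ = RunCost Term c ρ := by rw [RunCost, ← hN, Int.cast_sub]

theorem IsPF.neg (hφ : IsPF step Term Init c φ) : IsAntiPF step Term Init (-c) (-φ) := by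
  refine ⟨fun s s' hs hstep ↦ ?_, fun s hs hs_term ↦ neg_nonpos.mpr (hφ.2 s hs hs_term)⟩
  simp only [Pi.neg_apply, Int.cast_neg]
  linarith [hφ.1 s s' hs hstep]

theorem IsPF.runCost_le (hφ : IsPF step Term Init c φ) (hs : s ∈ Init)
    (hρ : IsRun step s ρ) (hterm : ∃ n, ρ n ∈ Term) : RunCost Term c ρ ≤ φ s := by
  have hneg : -φ s ≤ -(RunCost Term c ρ : ℝ) := by
    simpa only [Pi.neg_apply, runCost_neg, Int.cast_neg] using hφ.neg.le_runCost hs hρ hterm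
  exact neg_le_neg_iff.mp hneg

end SingleSystem

theorem antipf_pf_lower_bound_diffcost_general {Sn So : Type*}
    {stepN : Sn → Sn → Prop} {TermN InitN : Set Sn} {cN : Sn → ℤ}
    {stepO : So → So → Prop} {TermO InitO : Set So} {cO : So → ℤ}
    {χN : Sn → ℝ} (hχN : IsAntiPF stepN TermN InitN cN χN)
    {φO : So → ℝ} (hφO : IsPF stepO TermO InitO cO φO)
    {sN : Sn} (hsN : sN ∈ InitN) {sO : So} (hsO : sO ∈ InitO)
    {ρN : ℕ → Sn} (hρN : IsRun stepN sN ρN) (htermN : ∃ n, ρN n ∈ TermN)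
    {ρO : ℕ → So} (hρO : IsRun stepO sO ρO) (htermO : ∃ n, ρO n ∈ TermO) :
    χN sN - φO sO ≤ (RunCost TermN cN ρN : ℝ) - (RunCost TermO cO ρO : ℝ) :=
  sub_le_sub (hχN.le_runCost hsN hρN htermN) (hφO.runCost_le hsO hρO htermO)

/-- an anti-PF for the new system and a PF for the old system lower-bound
the difference in cost between the two systems on any shared input. -/
theorem antipf_pf_lower_bound_diffcost {Sn So X : Type*}
    (stepN : Sn → Sn → Prop) (TermN : Set Sn) (cN : Sn → ℤ)
    (stepO : So → So → Prop) (TermO : Set So) (cO : So → ℤ)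
    (Θ₀ : Set X) (ιN : X → Sn) (ιO : X → So)
    (htotalN : ∀ s : Sn, ∃ s', stepN s s')
    (htotalO : ∀ s : So, ∃ s', stepO s s')
    (hTermN : ∀ s ∈ TermN, ∀ s', stepN s s' → s' = s)
    (hTermO : ∀ s ∈ TermO, ∀ s', stepO s s' → s' = s)
    (hterminatingN : Terminating stepN TermN (ιN '' Θ₀))
    (hterminatingO : Terminating stepO TermO (ιO '' Θ₀))
    (χN : Sn → ℝ) (hχN : IsAntiPF stepN TermN (ιN '' Θ₀) cN χN)
    (φO : So → ℝ) (hφO : IsPF stepO TermO (ιO '' Θ₀) cO φO)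
    (x : X) (hx : x ∈ Θ₀)
    (ρN : ℕ → Sn) (hρN : IsRun stepN (ιN x) ρN)
    (ρO : ℕ → So) (hρO : IsRun stepO (ιO x) ρO) :
    χN (ιN x) - φO (ιO x) ≤ ((RunCost TermN cN ρN : ℝ) - (RunCost TermO cO ρO : ℝ)) :=
  antipf_pf_lower_bound_diffcost_general hχN hφO ⟨x, hx, rfl⟩ ⟨x, hx, rfl⟩ hρN
    (hterminatingN.exists_mem ⟨x, hx, rfl⟩ hρN) hρO (hterminatingO.exists_mem ⟨x, hx, rfl⟩ hρO)
end
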